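/- arXiv:2408.02488 — 3 statements merged into one kernel-verified Lean document; each statement's English description precedes it below -/
import Mathlib

section
/- Let G and H be two n-vertex graphs whose adjacency matrices are written in the block form A(G) = [[A₁, b],[bᵀ, 0]] and A(H) = [[B₁, c],[cᵀ, 0]], where the last vertex of each graph is designated as a root (so A₁ = A(G−uₙ), B₁ = A(H−vₙ), and b, c ∈ {0,1}^{n−1} are the neighborhood indicator vectors of the roots). If G and H are generalized cospectral and G−uₙ and H−vₙ are generalized cospectral, then there exists an (n−1)×(n−1) regular orthogonal matrix Q such that Qᵀ A₁ Q = B₁ and Qᵀ b = c (equivalently, the block-diagonal regular orthogonal matrix diag(Q,1) satisfies diag(Qᵀ,1) A(G) diag(Q,1) = A(H)). -/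
open Matrix

noncomputable section

/-- The adjacency matrix of the complement graph: `J - I - A`. -/
def complMat {V : Type} [Fintype V] [DecidableEq V] (A : Matrix V V ℝ) : Matrix V V ℝ :=
  (Matrix.of fun _ _ => (1 : ℝ)) - 1 - A

/-- Two graphs, given by their adjacency matrices, are generalized cospectral if they are
cospectral and their complements are cospectral. -/
def GenCospectral {V : Type} [Fintype V] [DecidableEq V] (A B : Matrix V V ℝ) : Prop :=
  A.charpoly = B.charpoly ∧ (complMat A).charpoly = (complMat B).charpoly

/-- The bordered matrix `[[A, b], [bᵀ, 0]]` (adjacency matrix of the overgraph `G + b`). -/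
def border {V : Type} [Fintype V] [DecidableEq V] (A : Matrix V V ℝ) (b : V → ℝ) :
    Matrix (V ⊕ Unit) (V ⊕ Unit) ℝ :=
  Matrix.fromBlocks A (Matrix.of fun i _ => b i) (Matrix.of fun _ j => b j) 0

lemma aux_det1 {m : ℕ} (A : Matrix (Fin m) (Fin m) ℝ) (b : Fin m → ℝ) (x : ℝ)
    (hN : IsUnit (Matrix.scalar (Fin m) x - A).det) :
    (Matrix.scalar (Fin m ⊕ Unit) x - border A b).det =
      (Matrix.scalar (Fin m) x - A).det *
        (x - b ⬝ᵥ ((Matrix.scalar (Fin m) x - A)⁻¹ *ᵥ b)) := by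
  set N := Matrix.scalar (Fin m) x - A with hNdef
  have h : Matrix.scalar (Fin m ⊕ Unit) x - border A b =
      Matrix.fromBlocks N (-Matrix.of fun i _ => b i) (-Matrix.of fun _ j => b j)
        (Matrix.of fun _ _ => x) := by
    ext i j
    rcases i with i | i <;> rcases j with j | j <;>
      simp [border, hNdef, Matrix.diagonal_apply]
  have := Matrix.invertibleOfIsUnitDet N hN
  rw [h, Matrix.det_fromBlocks₁₁, Matrix.invOf_eq_nonsing_inv, Matrix.mul_assoc]
  congr 1
  rw [Matrix.det_unique]
  simp [Matrix.mul_apply, dotProduct, Matrix.mulVec]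

lemma aux_det2 {m : ℕ} (A : Matrix (Fin m) (Fin m) ℝ) (x : ℝ)
    (hN : IsUnit (Matrix.scalar (Fin m) x - A).det) :
    (Matrix.scalar (Fin m) (-(1 + x)) - complMat A).det =
      (-1) ^ m * ((Matrix.scalar (Fin m) x - A).det *
        (1 + (fun _ => (1 : ℝ)) ⬝ᵥ ((Matrix.scalar (Fin m) x - A)⁻¹ *ᵥ (fun _ => (1 : ℝ))))) := by
  set N := Matrix.scalar (Fin m) x - A with hNdef
  have h : Matrix.scalar (Fin m) (-(1 + x)) - complMat A =
      -(N + replicateCol Unit (fun _ => (1:ℝ)) * replicateRow Unit (fun _ => (1:ℝ))) := by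
    ext i j
    by_cases hij : i = j
    · subst hij
      simp [complMat, hNdef, Matrix.mul_apply]; ring
    · simp [complMat, hNdef, Matrix.mul_apply, hij]; ring
  rw [h, Matrix.det_neg, Matrix.det_add_replicateCol_mul_replicateRow hN, Matrix.mul_assoc]
  simp [Matrix.mul_apply, dotProduct, Matrix.mulVec]

def auxEquiv (m : ℕ) : (Fin m ⊕ Unit) ⊕ Unit ≃ Fin m ⊕ Fin 2 where
  toFun := Sum.elim (Sum.elim Sum.inl (fun _ => Sum.inr 0)) (fun _ => Sum.inr 1)
  invFun := Sum.elim (fun i => Sum.inl (Sum.inl i)) ![Sum.inl (Sum.inr ()), Sum.inr ()]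
  left_inv := by rintro ((i | i) | i) <;> simp
  right_inv := by
    rintro (i | i)
    · simp
    · fin_cases i <;> simp

lemma aux_det3 {m : ℕ} (A : Matrix (Fin m) (Fin m) ℝ) (b : Fin m → ℝ) (x : ℝ)
    (hN : IsUnit (Matrix.scalar (Fin m) x - A).det) :
    (Matrix.scalar (Fin m ⊕ Unit) (-(1 + x)) - complMat (border A b)).det =
      (-1) ^ (m + 1) * ((Matrix.scalar (Fin m) x - A).det *
        ((x - b ⬝ᵥ ((Matrix.scalar (Fin m) x - A)⁻¹ *ᵥ b)) *
          (1 + (fun _ => (1 : ℝ)) ⬝ᵥ ((Matrix.scalar (Fin m) x - A)⁻¹ *ᵥ (fun _ => (1 : ℝ))))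
        + (1 + (fun _ => (1 : ℝ)) ⬝ᵥ ((Matrix.scalar (Fin m) x - A)⁻¹ *ᵥ b)) *
          (1 + b ⬝ᵥ ((Matrix.scalar (Fin m) x - A)⁻¹ *ᵥ (fun _ => (1 : ℝ)))))) := by
  set N := Matrix.scalar (Fin m) x - A with hNdef
  let M := Matrix.scalar (Fin m ⊕ Unit) x - border A b
  have h : Matrix.scalar (Fin m ⊕ Unit) (-(1 + x)) - complMat (border A b) =
      -(M - (Matrix.of fun _ _ => (1:ℝ) : Matrix (Fin m ⊕ Unit) Unit ℝ) *
        (Matrix.of fun _ _ => (-1:ℝ) : Matrix Unit (Fin m ⊕ Unit) ℝ)) := by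
    ext i j
    by_cases hij : i = j
    · subst hij
      simp [complMat, M, Matrix.mul_apply]; ring
    · simp [complMat, M, Matrix.mul_apply, hij]; ring
  have h2 : Matrix.fromBlocks M (Matrix.of fun _ _ => (1:ℝ) : Matrix (Fin m ⊕ Unit) Unit ℝ)
      (Matrix.of fun _ _ => (-1:ℝ) : Matrix Unit (Fin m ⊕ Unit) ℝ) 1 =
      (Matrix.fromBlocks N (Matrix.of fun i => ![- b i, 1]) (Matrix.of ![fun j => - b j, fun _ => -1])
        !![x, 1; -1, 1]).submatrix (auxEquiv m) (auxEquiv m) := by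
    ext i j
    rcases i with (i | i) | i <;> rcases j with (j | j) | j <;>
      simp [M, auxEquiv, border, hNdef, Matrix.diagonal_apply]
  have := Matrix.invertibleOfIsUnitDet N hN
  rw [h, Matrix.det_neg, ← Matrix.det_fromBlocks_one₂₂, h2, Matrix.det_submatrix_equiv_self,
    Matrix.det_fromBlocks₁₁, Matrix.invOf_eq_nonsing_inv, Matrix.mul_assoc]
  have hc : Fintype.card (Fin m ⊕ Unit) = m + 1 := by simp
  rw [hc]
  congr 2
  rw [Matrix.det_fin_two]
  simp only [Matrix.sub_apply, Matrix.mul_apply, dotProduct, Matrix.mulVec, Matrix.of_apply,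
    Matrix.cons_val_zero, Matrix.cons_val_one, Matrix.cons_val', Matrix.cons_val_fin_one]
  simp only [mul_neg, neg_mul, Finset.sum_neg_distrib, mul_one, one_mul]
  ring

lemma aux_spec {m : ℕ} (A : Matrix (Fin m) (Fin m) ℝ) (hA : A.IsHermitian) :
    ∃ U : Matrix (Fin m) (Fin m) ℝ, Uᵀ * U = 1 ∧ U * Uᵀ = 1 ∧
      A = U * diagonal hA.eigenvalues * Uᵀ := by
  refine ⟨hA.eigenvectorUnitary, ?_, ?_, ?_⟩
  · have := Unitary.coe_star_mul_self hA.eigenvectorUnitary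
    simpa [Matrix.star_eq_conjTranspose] using this
  · have := Unitary.coe_mul_star_self hA.eigenvectorUnitary
    simpa [Matrix.star_eq_conjTranspose] using this
  · have := hA.spectral_theorem
    simpa [Unitary.conjStarAlgAut_apply, Matrix.star_eq_conjTranspose, Function.comp_def] using this

lemma aux_res {m : ℕ} (A U : Matrix (Fin m) (Fin m) ℝ) (d : Fin m → ℝ)
    (h1 : Uᵀ * U = 1) (h2 : U * Uᵀ = 1) (hA : A = U * diagonal d * Uᵀ) (x : ℝ)
    (hx : ∀ i, x - d i ≠ 0) :
    IsUnit (Matrix.scalar (Fin m) x - A).det ∧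
    ∀ u v, u ⬝ᵥ ((Matrix.scalar (Fin m) x - A)⁻¹ *ᵥ v) =
      ∑ i, (Uᵀ *ᵥ u) i * (Uᵀ *ᵥ v) i / (x - d i) := by
  have hN : Matrix.scalar (Fin m) x - A = U * diagonal (fun i => x - d i) * Uᵀ := by
    have : diagonal (fun i => x - d i) = x • (1 : Matrix (Fin m) (Fin m) ℝ) - diagonal d := by
      ext i j; by_cases h : i = j <;> simp [h]
    rw [this, Matrix.mul_sub, Matrix.sub_mul, ← hA]
    rw [Matrix.mul_smul, Matrix.mul_one, Matrix.smul_mul, h2, Matrix.smul_one_eq_diagonal]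
    rfl
  have hinv : (Matrix.scalar (Fin m) x - A) * (U * diagonal (fun i => (x - d i)⁻¹) * Uᵀ) = 1 := by
    rw [hN]
    calc _ = U * diagonal (fun i => x - d i) * (Uᵀ * U) * diagonal (fun i => (x - d i)⁻¹) * Uᵀ := by
          simp only [Matrix.mul_assoc]
      _ = 1 := by
          rw [h1, Matrix.mul_one, Matrix.mul_assoc U, Matrix.diagonal_mul_diagonal]
          simp [hx, h2]
  refine ⟨Matrix.isUnit_det_of_right_inverse hinv, fun u v => ?_⟩
  rw [Matrix.inv_eq_right_inv hinv, ← Matrix.mulVec_mulVec, ← Matrix.mulVec_mulVec,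
    Matrix.dotProduct_mulVec, ← Matrix.mulVec_transpose]
  simp only [dotProduct, Matrix.mulVec_diagonal]
  exact Finset.sum_congr rfl fun i _ => by ring

lemma aux_partial {m : ℕ} (d g : Fin m → ℝ)
    (h : ∀ᶠ x in Filter.atTop, ∑ i, g i / (x - d i) = 0) (l : ℝ) :
    ∑ i, (if d i = l then g i else 0) = 0 := by
  classical
  by_cases hl : l ∈ Finset.univ.image d
  swap
  · refine Finset.sum_eq_zero fun i _ => ?_
    rw [if_neg]
    rintro rfl
    exact hl (by simp)
  set S := Finset.univ.image d with hS
  let P : Polynomial ℝ := ∑ i, Polynomial.C (g i) *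
    ∏ μ ∈ S.erase (d i), (Polynomial.X - Polynomial.C μ)
  have hev : ∀ᶠ x in Filter.atTop, P.eval x = 0 := by
    have hne : ∀ᶠ x : ℝ in Filter.atTop, ∀ i, x - d i ≠ 0 := by
      rw [Filter.eventually_all]
      intro i
      filter_upwards [Filter.eventually_gt_atTop (d i)] with x hx
      exact sub_ne_zero.mpr hx.ne'
    filter_upwards [h, hne] with x hx hn
    have : P.eval x = (∏ μ ∈ S, (x - μ)) * ∑ i, g i / (x - d i) := by
      simp only [P, Polynomial.eval_finsetSum, Polynomial.eval_mul, Polynomial.eval_C,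
        Polynomial.eval_prod, Polynomial.eval_sub, Polynomial.eval_X, Finset.mul_sum]
      refine Finset.sum_congr rfl fun i _ => ?_
      rw [← Finset.mul_prod_erase S (fun μ => x - μ) (a := d i) (by simp [hS])]
      have := hn i
      field_simp
    rw [this, hx, mul_zero]
  have hP : P = 0 := by
    apply Polynomial.eq_zero_of_infinite_isRoot
    obtain ⟨a, ha⟩ := Filter.eventually_atTop.mp hev
    exact (Set.Ici_infinite a).mono fun x hx => ha x hx
  have h0 : P.eval l = 0 := by rw [hP]; simp
  have h1 : P.eval l = (∏ μ ∈ S.erase l, (l - μ)) * ∑ i, (if d i = l then g i else 0) := by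
    simp only [P, Polynomial.eval_finsetSum, Polynomial.eval_mul, Polynomial.eval_C,
      Polynomial.eval_prod, Polynomial.eval_sub, Polynomial.eval_X, Finset.mul_sum]
    refine Finset.sum_congr rfl fun i _ => ?_
    split_ifs with hi
    · rw [hi]; ring
    · rw [Finset.prod_eq_zero (i := l)]
      · simp
      · exact Finset.mem_erase.mpr ⟨fun h => hi h.symm, hl⟩
      · simp
  rw [h1] at h0
  refine (mul_eq_zero.mp h0).resolve_left (Finset.prod_ne_zero_iff.mpr fun μ hμ => ?_)
  exact sub_ne_zero.mpr (Finset.mem_erase.mp hμ).1.symm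

/-- Blockwise inner product. -/
def auxIp {m : ℕ} (d u v : Fin m → ℝ) (l : ℝ) : ℝ := ∑ i, if d i = l then u i * v i else 0

lemma auxIp_presv {m : ℕ} (d : Fin m → ℝ) (W : Matrix (Fin m) (Fin m) ℝ) (h1 : Wᵀ * W = 1)
    (h2 : ∀ f : ℝ → ℝ, W * diagonal (fun i => f (d i)) = diagonal (fun i => f (d i)) * W)
    (u v : Fin m → ℝ) (l : ℝ) : auxIp d (W *ᵥ u) (W *ᵥ v) l = auxIp d u v l := by
  have key : ∀ u v, auxIp d u v l = u ⬝ᵥ (diagonal (fun i => if d i = l then (1:ℝ) else 0) *ᵥ v) := by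
    intro u v
    simp [auxIp, dotProduct, Matrix.mulVec_diagonal]
  rw [key, key, Matrix.mulVec_mulVec, ← h2 (fun t => if t = l then 1 else 0),
    ← Matrix.mulVec_mulVec, Matrix.dotProduct_mulVec, Matrix.vecMul_mulVec, h1]
  simp

lemma auxIp_comm {m : ℕ} (d u v : Fin m → ℝ) (l : ℝ) : auxIp d u v l = auxIp d v u l := by
  simp [auxIp, mul_comm]

lemma auxIp_sub {m : ℕ} (d u v w : Fin m → ℝ) (l : ℝ) :
    auxIp d u (v - w) l = auxIp d u v l - auxIp d u w l := by
  rw [auxIp, auxIp, auxIp, ← Finset.sum_sub_distrib]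
  refine Finset.sum_congr rfl fun i _ => ?_
  split_ifs <;> simp [mul_sub]

lemma auxIp_zero {m : ℕ} (d w : Fin m → ℝ) (i : Fin m) (h : auxIp d w w (d i) = 0) : w i = 0 := by
  rw [auxIp, Finset.sum_eq_zero_iff_of_nonneg] at h
  · have := h i (Finset.mem_univ _)
    simpa using this
  · intro j _
    split_ifs
    · exact mul_self_nonneg _
    · exact le_rfl

lemma aux_house {m : ℕ} (d v v' : Fin m → ℝ) (h : ∀ l, auxIp d v v l = auxIp d v' v' l) :
    ∃ W : Matrix (Fin m) (Fin m) ℝ, Wᵀ * W = 1 ∧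
      (∀ f : ℝ → ℝ, W * diagonal (fun i => f (d i)) = diagonal (fun i => f (d i)) * W) ∧
      W *ᵥ v = v' ∧ ∀ u, (∀ l, auxIp d u v l = auxIp d u v' l) → W *ᵥ u = u := by
  set w := v - v' with hw
  let K : Matrix (Fin m) (Fin m) ℝ := Matrix.of fun i j =>
    if d j = d i then 2 * w i * w j / auxIp d w w (d i) else 0
  have hK : ∀ u i, ((1 - K) *ᵥ u) i = u i - 2 * w i * auxIp d w u (d i) / auxIp d w w (d i) := by
    intro u i
    rw [Matrix.sub_mulVec, Matrix.one_mulVec, Pi.sub_apply]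
    congr 1
    rw [auxIp, Finset.mul_sum, Finset.sum_div, Matrix.mulVec, dotProduct]
    refine Finset.sum_congr rfl fun j _ => ?_
    simp only [K, Matrix.of_apply]
    split_ifs <;> ring
  have hT : (1 - K)ᵀ = 1 - K := by
    rw [Matrix.transpose_sub, Matrix.transpose_one]
    congr 1
    ext i j
    simp only [K, Matrix.transpose_apply, Matrix.of_apply]
    by_cases hij : d i = d j
    · simp [hij]; ring
    · simp [hij, Ne.symm hij]
  have hip : ∀ u i, auxIp d w ((1 - K) *ᵥ u) (d i) =
      auxIp d w u (d i) - 2 * (auxIp d w u (d i) / auxIp d w w (d i)) * auxIp d w w (d i) := by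
    intro u i
    conv_lhs => rw [auxIp]
    conv_rhs => rw [auxIp]
    conv_rhs => enter [2, 2]; rw [auxIp]
    rw [Finset.mul_sum, ← Finset.sum_sub_distrib]
    refine Finset.sum_congr rfl fun j _ => ?_
    split_ifs with hj
    · rw [hK, hj]
      conv_rhs => enter [2,1,2,1]; rw [← auxIp]
      ring
    · simp
  refine ⟨1 - K, ?_, ?_, ?_, ?_⟩
  · rw [hT]
    apply Matrix.toLin'.injective
    apply LinearMap.ext
    intro u
    rw [Matrix.toLin'_apply, ← Matrix.mulVec_mulVec, Matrix.toLin'_apply, Matrix.one_mulVec]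
    ext i
    rw [hK, hip, hK]
    by_cases hs : auxIp d w w (d i) = 0
    · simp [auxIp_zero d w i hs]
    · field_simp
      ring
  · intro f
    ext i j
    rw [Matrix.mul_diagonal, Matrix.diagonal_mul]
    by_cases hij : d j = d i
    · rw [hij]; ring
    · have : i ≠ j := by rintro rfl; exact hij rfl
      simp [K, hij, this]
  · ext i
    rw [hK]
    by_cases hs : auxIp d w w (d i) = 0
    · have := auxIp_zero d w i hs
      rw [this]
      have h3 : v i - v' i = 0 := this
      simp; linarith
    · have h4 : 2 * auxIp d w v (d i) = auxIp d w w (d i) := by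
        have e1 := auxIp_sub d w v v' (d i)
        have e2 := auxIp_sub d v v v' (d i)
        have e3 := auxIp_sub d v' v v' (d i)
        rw [← hw] at e1 e2 e3
        have e4 := h (d i)
        rw [auxIp_comm d w v, auxIp_comm d w v'] at e1
        rw [auxIp_comm d v' v] at e3
        rw [auxIp_comm d w v]
        linarith
      have : 2 * w i * auxIp d w v (d i) / auxIp d w w (d i) = w i := by
        rw [div_eq_iff hs, ← h4]
        ring
      rw [this]
      simp [hw]
  · intro u hu
    ext i
    rw [hK, auxIp_comm d w u, hw, auxIp_sub, hu]
    simp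

lemma aux_two {m : ℕ} (d a b a' b' : Fin m → ℝ) (h1 : ∀ l, auxIp d a a l = auxIp d a' a' l)
    (h2 : ∀ l, auxIp d a b l = auxIp d a' b' l) (h3 : ∀ l, auxIp d b b l = auxIp d b' b' l) :
    ∃ W : Matrix (Fin m) (Fin m) ℝ, Wᵀ * W = 1 ∧
      W * diagonal d = diagonal d * W ∧ W *ᵥ a = a' ∧ W *ᵥ b = b' := by
  obtain ⟨W₁, o1, c1, e1, -⟩ := aux_house d a a' h1
  have p := auxIp_presv d W₁ o1 c1
  obtain ⟨W₂, o2, c2, e2, f2⟩ := aux_house d (W₁ *ᵥ b) b' (fun l => by rw [p, h3])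
  refine ⟨W₂ * W₁, ?_, ?_, ?_, ?_⟩
  · rw [Matrix.transpose_mul, Matrix.mul_assoc, ← Matrix.mul_assoc W₂ᵀ, o2, Matrix.one_mul, o1]
  · have c1' := c1 id
    have c2' := c2 id
    simp only [id] at c1' c2'
    rw [Matrix.mul_assoc, c1', ← Matrix.mul_assoc, c2', Matrix.mul_assoc]
  · rw [← Matrix.mulVec_mulVec, e1]
    apply f2
    intro l
    rw [← h2, ← p a b, e1]
  · rw [← Matrix.mulVec_mulVec, e2]

lemma aux_ipeq {m : ℕ} (d u v u' v' : Fin m → ℝ)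
    (h : ∀ᶠ x in Filter.atTop, ∑ i, u i * v i / (x - d i) = ∑ i, u' i * v' i / (x - d i)) (l : ℝ) :
    auxIp d u v l = auxIp d u' v' l := by
  have := aux_partial d (fun i => u i * v i - u' i * v' i) (by
    filter_upwards [h] with x hx
    simp only [sub_div, Finset.sum_sub_distrib, hx, sub_self]) l
  rw [← sub_eq_zero, ← this, auxIp, auxIp, ← Finset.sum_sub_distrib]
  refine Finset.sum_congr rfl fun i _ => ?_
  split_ifs <;> simp

lemma aux_tend {m : ℕ} (d g : Fin m → ℝ) :
    ∀ᶠ x in Filter.atTop, 0 < 1 + ∑ i, g i / (x - d i) := by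
  have : Filter.Tendsto (fun x : ℝ => ∑ i, g i / (x - d i)) Filter.atTop (nhds 0) := by
    rw [← Finset.sum_const_zero (s := (Finset.univ : Finset (Fin m)))]
    refine tendsto_finsetSum _ fun i _ => ?_
    exact Filter.Tendsto.const_div_atTop (Filter.tendsto_atTop_add_const_right _ _ Filter.tendsto_id) _
  filter_upwards [this.eventually (lt_mem_nhds (show (-1:ℝ) < 0 by norm_num))] with x hx
  linarith

/-- If the rooted graphs `(G, uₙ)` and `(H, vₙ)` are generalized cospectral
(i.e. `G, H` are generalized cospectral and `G - uₙ, H - vₙ` are generalized cospectral), then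
there is a regular orthogonal matrix `Q` with `Qᵀ A₁ Q = B₁` and `Qᵀ b = c`. -/
theorem rooted_genCospectral_exists_regular_orthogonal
    {m : ℕ} (A₁ B₁ : Matrix (Fin m) (Fin m) ℝ) (b c : Fin m → ℝ)
    (hA₁ : A₁.IsAdjMatrix) (hB₁ : B₁.IsAdjMatrix)
    (hb : ∀ i, b i = 0 ∨ b i = 1) (hc : ∀ i, c i = 0 ∨ c i = 1)
    (hGH : GenCospectral (border A₁ b) (border B₁ c))
    (hdel : GenCospectral A₁ B₁) :
    ∃ Q : Matrix (Fin m) (Fin m) ℝ,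
      Qᵀ * Q = 1 ∧ (Q *ᵥ fun _ => (1 : ℝ)) = (fun _ => 1) ∧
        Qᵀ * A₁ * Q = B₁ ∧ Qᵀ *ᵥ b = c := by
  have hA : A₁.IsHermitian := by
    have := hA₁.symm
    rw [Matrix.IsHermitian, Matrix.conjTranspose_eq_transpose_of_trivial]; exact this
  have hB : B₁.IsHermitian := by
    have := hB₁.symm
    rw [Matrix.IsHermitian, Matrix.conjTranspose_eq_transpose_of_trivial]; exact this
  obtain ⟨U, hU1, hU2, hUA⟩ := aux_spec A₁ hA
  obtain ⟨V, hV1, hV2, hVB⟩ := aux_spec B₁ hB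
  rw [← (Matrix.IsHermitian.eigenvalues_eq_eigenvalues_iff hA hB).mpr hdel.1] at hVB
  set d := hA.eigenvalues with hd
  have hne : ∀ᶠ x : ℝ in Filter.atTop, ∀ i, x - d i ≠ 0 := by
    rw [Filter.eventually_all]
    intro i
    filter_upwards [Filter.eventually_gt_atTop (d i)] with x hx
    exact sub_ne_zero.mpr hx.ne'
  let e : Fin m → ℝ := fun _ => 1
  have main : ∀ᶠ x in Filter.atTop,
      (∑ i, (Vᵀ *ᵥ e) i * (Vᵀ *ᵥ e) i / (x - d i) = ∑ i, (Uᵀ *ᵥ e) i * (Uᵀ *ᵥ e) i / (x - d i)) ∧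
      (∑ i, (Vᵀ *ᵥ e) i * (Vᵀ *ᵥ c) i / (x - d i) = ∑ i, (Uᵀ *ᵥ e) i * (Uᵀ *ᵥ b) i / (x - d i)) ∧
      (∑ i, (Vᵀ *ᵥ c) i * (Vᵀ *ᵥ c) i / (x - d i) = ∑ i, (Uᵀ *ᵥ b) i * (Uᵀ *ᵥ b) i / (x - d i)) := by
    filter_upwards [hne, aux_tend d (fun i => (Vᵀ *ᵥ e) i * (Vᵀ *ᵥ c) i),
      aux_tend d (fun i => (Uᵀ *ᵥ e) i * (Uᵀ *ᵥ b) i)] with x hx t1 t2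
    obtain ⟨uA, rA⟩ := aux_res A₁ U d hU1 hU2 hUA x hx
    obtain ⟨uB, rB⟩ := aux_res B₁ V d hV1 hV2 hVB x hx
    have g0 := congrArg (Polynomial.eval x) hdel.1
    have g1 := congrArg (Polynomial.eval x) hGH.1
    have g2 := congrArg (Polynomial.eval (-(1 + x))) hdel.2
    have g3 := congrArg (Polynomial.eval (-(1 + x))) hGH.2
    simp only [Matrix.eval_charpoly] at g0 g1 g2 g3
    rw [aux_det1 _ _ _ uA, aux_det1 _ _ _ uB, ← g0, rA, rB] at g1
    rw [aux_det2 _ _ uA, aux_det2 _ _ uB, ← g0, rA, rB] at g2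
    rw [aux_det3 _ _ _ uA, aux_det3 _ _ _ uB, ← g0, rA, rB, rA, rB, rA, rB, rA, rB] at g3
    have n0 := uA.ne_zero
    have g1' := mul_left_cancel₀ n0 g1
    have g2' := mul_left_cancel₀ n0 (mul_left_cancel₀ (pow_ne_zero _ (by norm_num)) g2)
    have g3' := mul_left_cancel₀ n0 (mul_left_cancel₀ (pow_ne_zero _ (by norm_num)) g3)
    have s1 : ∑ i, (Uᵀ *ᵥ b) i * (Uᵀ *ᵥ e) i / (x - d i) =
        ∑ i, (Uᵀ *ᵥ e) i * (Uᵀ *ᵥ b) i / (x - d i) :=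
      Finset.sum_congr rfl fun i _ => by ring
    have s2 : ∑ i, (Vᵀ *ᵥ c) i * (Vᵀ *ᵥ e) i / (x - d i) =
        ∑ i, (Vᵀ *ᵥ e) i * (Vᵀ *ᵥ c) i / (x - d i) :=
      Finset.sum_congr rfl fun i _ => by ring
    change _ * _ + (1 + ∑ i, (Uᵀ *ᵥ e) i * (Uᵀ *ᵥ b) i / (x - d i)) *
      (1 + ∑ i, (Uᵀ *ᵥ b) i * (Uᵀ *ᵥ e) i / (x - d i)) =
      _ * _ + (1 + ∑ i, (Vᵀ *ᵥ e) i * (Vᵀ *ᵥ c) i / (x - d i)) *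
      (1 + ∑ i, (Vᵀ *ᵥ c) i * (Vᵀ *ᵥ e) i / (x - d i)) at g3'
    rw [s1, s2, g1', g2'] at g3'
    refine ⟨(add_left_cancel g2').symm, ?_, (sub_right_injective g1').symm⟩
    have g4 := (mul_self_inj t2.le t1.le).mp (add_left_cancel g3')
    exact (add_left_cancel g4).symm
  obtain ⟨W, w1, w2, w3, w4⟩ := aux_two d (Vᵀ *ᵥ e) (Vᵀ *ᵥ c) (Uᵀ *ᵥ e) (Uᵀ *ᵥ b)
    (aux_ipeq _ _ _ _ _ (main.mono fun _ h => h.1))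
    (aux_ipeq _ _ _ _ _ (main.mono fun _ h => h.2.1))
    (aux_ipeq _ _ _ _ _ (main.mono fun _ h => h.2.2))
  have hQ : (U * W * Vᵀ)ᵀ * (U * W * Vᵀ) = 1 := by
    simp only [Matrix.transpose_mul, Matrix.transpose_transpose]
    calc _ = V * (Wᵀ * (Uᵀ * U) * W) * Vᵀ := by simp only [Matrix.mul_assoc]
      _ = 1 := by rw [hU1, Matrix.mul_one, w1, Matrix.mul_one, hV2]
  refine ⟨U * W * Vᵀ, hQ, ?_, ?_, ?_⟩
  · change (U * W * Vᵀ) *ᵥ e = e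
    rw [← Matrix.mulVec_mulVec, ← Matrix.mulVec_mulVec, w3, Matrix.mulVec_mulVec, hU2,
      Matrix.one_mulVec]
  · rw [hUA, hVB]
    simp only [Matrix.transpose_mul, Matrix.transpose_transpose]
    calc _ = V * (Wᵀ * ((Uᵀ * U) * diagonal d * (Uᵀ * U) * W)) * Vᵀ := by
          simp only [Matrix.mul_assoc]
      _ = _ := by
          rw [hU1, Matrix.mul_one, Matrix.one_mul, ← w2, ← Matrix.mul_assoc Wᵀ, w1, Matrix.one_mul]
  · have : (U * W * Vᵀ) *ᵥ c = b := by
      rw [← Matrix.mulVec_mulVec, ← Matrix.mulVec_mulVec, w4, Matrix.mulVec_mulVec, hU2,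
        Matrix.one_mulVec]
    rw [← this, Matrix.mulVec_mulVec, hQ, Matrix.one_mulVec]
end
end

section
/- Let G be a graph on n ≥ 3 vertices. If there exists a vertex u of G such that the vertex-deleted subgraph G−u is controllable, then G is reconstructible. -/
open Matrix

open scoped Classical

noncomputable section

/-- The real adjacency matrix of a simple graph. -/
def adjMat {V : Type} [Fintype V] (G : SimpleGraph V) : Matrix V V ℝ :=
  Matrix.of fun i j => if G.Adj i j then 1 else 0

/-- The walk matrix `W(G) = [e, Ae, …, A^{m-1}e]` of a square matrix `A`
(`m` = number of rows). -/
def walkMatrix {V : Type} [Fintype V] [DecidableEq V] (A : Matrix V V ℝ) :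
    Matrix V (Fin (Fintype.card V)) ℝ :=
  Matrix.of fun i j => (A ^ (j : ℕ) *ᵥ fun _ => (1 : ℝ)) i

/-- A graph `G` is reconstructible if every graph with the same deck (i.e. every graph `H`
admitting a bijection `σ` of the vertices such that `G - v ≅ H - σ v` for all `v`) is
isomorphic to `G`. -/
def Reconstructible {n : ℕ} (G : SimpleGraph (Fin n)) : Prop :=
  ∀ H : SimpleGraph (Fin n),
    (∃ σ : Equiv.Perm (Fin n),
      ∀ v : Fin n,
        Nonempty ((G.induce {w : Fin n | w ≠ v}) ≃g (H.induce {w : Fin n | w ≠ σ v}))) →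
    Nonempty (G ≃g H)


open Polynomial

section gen
variable {W : Type} [Fintype W] [DecidableEq W]

def yv (A : Matrix W W ℝ) : W → ℝ[X] := adjugate (charmatrix A) *ᵥ (fun _ => 1)

def Nn (A : Matrix W W ℝ) : ℝ[X] := ∑ i, yv A i

lemma charmatrix_mulVec (A : Matrix W W ℝ) (y : W → ℝ[X]) (i : W) :
    (charmatrix A *ᵥ y) i = X * y i - ∑ j, C (A i j) * y j := by
  simp [charmatrix, Matrix.mulVec, dotProduct, Matrix.diagonal_apply, sub_mul,
    Finset.sum_sub_distrib]

lemma M_yv (A : Matrix W W ℝ) : charmatrix A *ᵥ yv A = fun _ => A.charpoly := by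
  unfold yv
  rw [Matrix.mulVec_mulVec, Matrix.mul_adjugate, Matrix.smul_mulVec, Matrix.one_mulVec]
  ext1 i
  simp [Matrix.charpoly]

lemma yv_rec (A : Matrix W W ℝ) (i : W) :
    X * yv A i = ∑ j, C (A i j) * yv A j + A.charpoly := by
  have := congrFun (M_yv A) i
  rw [charmatrix_mulVec] at this
  linear_combination this

lemma yv_coeff_rec (A : Matrix W W ℝ) (i : W) (k : ℕ) :
    (yv A i).coeff k = ∑ j, A i j * (yv A j).coeff (k+1) + A.charpoly.coeff (k+1) := by
  have := congrArg (fun p => p.coeff (k+1)) (yv_rec A i)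
  simpa [Polynomial.finsetSum_coeff] using this

lemma yv_coeff_zero (A : Matrix W W ℝ) (k : ℕ) (hk : Fintype.card W ≤ k) (i : W) :
    (yv A i).coeff k = 0 := by
  obtain ⟨D, hD⟩ : ∃ D, ∀ i, (yv A i).natDegree < D :=
    ⟨(Finset.univ.sup fun i => (yv A i).natDegree) + 1, fun i =>
      Nat.lt_succ_of_le (Finset.le_sup (f := fun i => (yv A i).natDegree) (Finset.mem_univ i))⟩
  have key : ∀ m k, Fintype.card W ≤ k → D ≤ k + m → ∀ i, (yv A i).coeff k = 0 := by
    intro m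
    induction m with
    | zero =>
      intro k _ hkD i
      exact coeff_eq_zero_of_natDegree_lt (lt_of_lt_of_le (hD i) hkD)
    | succ m ih =>
      intro k hk hkD i
      rw [yv_coeff_rec]
      rw [coeff_eq_zero_of_natDegree_lt (p := A.charpoly)
        (by rw [Matrix.charpoly_natDegree_eq_dim]; omega)]
      simp [ih (k+1) (by omega) (by omega)]
  exact key D k hk (by omega) i

lemma yv_coeff_lead (A : Matrix W W ℝ) (k : ℕ) (hk : Fintype.card W = k + 1) (i : W) :
    (yv A i).coeff k = 1 := by
  rw [yv_coeff_rec]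
  have h1 : A.charpoly.coeff (k+1) = 1 := by
    rw [← hk, ← Matrix.charpoly_natDegree_eq_dim A]
    exact A.charpoly_monic.coeff_natDegree
  rw [h1]
  simp [yv_coeff_zero A (k+1) hk.le]

lemma deriv_charpoly (A : Matrix W W ℝ) :
    derivative A.charpoly = ∑ v, adjugate (charmatrix A) v v := by
  simp_rw [Matrix.adjugate_apply, Matrix.charpoly]
  rw [← Matrix.det_transpose]
  simp_rw [← Matrix.det_transpose (Matrix.updateRow _ _ _), Matrix.det_apply']
  rw [Finset.sum_comm, derivative_sum]
  refine Finset.sum_congr rfl fun σ _ => ?_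
  rw [← Finset.mul_sum, derivative_mul]
  have : derivative (((Equiv.Perm.sign σ : ℤ) : ℝ[X])) = 0 := by simp
  rw [this, zero_mul, zero_add, derivative_prod_finset]
  congr 1
  refine Finset.sum_congr rfl fun a _ => ?_
  rw [← Finset.prod_erase_mul _ _ (Finset.mem_univ a)]
  congr 1
  · refine Finset.prod_congr rfl fun b hb => ?_
    have : b ≠ a := Finset.ne_of_mem_erase hb
    simp [Matrix.updateRow_apply, this]
  · simp [Matrix.charmatrix_apply, Matrix.diagonal_apply, Pi.single_apply]
    by_cases h : a = σ a
    · simp [← h]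
    · simp [h, Ne.symm h]

lemma yv_reindex {W' : Type} [Fintype W'] [DecidableEq W'] (A : Matrix W W ℝ)
    (e : W ≃ W') (i : W) : yv (A.reindex e e) (e i) = yv A i := by
  unfold yv
  rw [Matrix.charmatrix_reindex, Matrix.adjugate_reindex]
  simp only [Matrix.mulVec, dotProduct]
  rw [← e.sum_comp]
  simp

lemma Nn_reindex {W' : Type} [Fintype W'] [DecidableEq W'] (A : Matrix W W ℝ)
    (e : W ≃ W') : Nn (A.reindex e e) = Nn A := by
  unfold Nn
  rw [← e.sum_comp]
  exact Finset.sum_congr rfl fun i _ => yv_reindex A e i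

lemma adj_symm (A : Matrix W W ℝ) (hA : Aᵀ = A) (i j : W) :
    adjugate (charmatrix A) i j = adjugate (charmatrix A) j i := by
  conv_lhs => rw [← hA, Matrix.charmatrix_transpose, ← Matrix.adjugate_transpose]
  rfl

/-- orthogonality from the polynomial identity -/
lemma orth (A : Matrix W W ℝ) (d : W → ℝ) (h : ∑ i, C (d i) * yv A i = 0) (k : ℕ) :
    d ⬝ᵥ (A ^ k *ᵥ fun _ => 1) = 0 := by
  have gen : ∀ k, ∀ d : W → ℝ, ∑ i, C (d i) * yv A i = 0 →
      d ⬝ᵥ (A ^ k *ᵥ fun _ => 1) = 0 := by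
    intro k
    have base : ∀ d : W → ℝ, ∑ i, C (d i) * yv A i = 0 →
        (∑ i, d i = 0) ∧ ∑ i, C ((d ᵥ* A) i) * yv A i = 0 := by
      intro d h
      have e1 : 0 = ∑ i, C ((d ᵥ* A) i) * yv A i + C (∑ i, d i) * A.charpoly := by
        have : ∑ i, C (d i) * (X * yv A i) = 0 := by
          have := congrArg (fun p => X * p) h
          simp only [mul_zero, Finset.mul_sum] at this
          refine Eq.trans ?_ this
          exact Finset.sum_congr rfl fun i _ => by ring
        have t1 : ∑ i, C ((d ᵥ* A) i) * yv A i
            = ∑ i, C (d i) * ∑ j, C (A i j) * yv A j := by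
          simp only [Matrix.vecMul, dotProduct, map_sum, Finset.sum_mul, Finset.mul_sum, map_mul]
          rw [Finset.sum_comm]
          exact Finset.sum_congr rfl fun i _ => Finset.sum_congr rfl fun j _ => mul_assoc _ _ _
        rw [t1, map_sum, Finset.sum_mul, ← Finset.sum_add_distrib]
        refine this.symm.trans (Finset.sum_congr rfl fun i _ => ?_)
        rw [yv_rec, mul_add]
      have e2 := congrArg (fun p => p.coeff (Fintype.card W)) e1
      have h1 : A.charpoly.coeff (Fintype.card W) = 1 := by
        rw [← Matrix.charpoly_natDegree_eq_dim A]
        exact A.charpoly_monic.coeff_natDegree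
      simp only [coeff_zero, coeff_add, finsetSum_coeff, coeff_C_mul, h1,
        yv_coeff_zero A _ le_rfl] at e2
      have e3 : ∑ i, d i = 0 := by simpa using e2.symm
      refine ⟨e3, ?_⟩
      rw [e3] at e1
      simpa using e1.symm
    induction k with
    | zero => intro d h; simpa [dotProduct] using (base d h).1
    | succ k ih =>
      intro d h
      have := ih _ (base d h).2
      rw [pow_succ', ← Matrix.mulVec_mulVec, Matrix.dotProduct_mulVec]
      exact this
  exact gen k d h

lemma eq_zero_of_ctrl (A : Matrix W W ℝ)
    (hr : (walkMatrix A).rank = Fintype.card W) (d : W → ℝ)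
    (h : ∑ i, C (d i) * yv A i = 0) : d = 0 := by
  have h1 : d ᵥ* walkMatrix A = 0 := by
    ext j
    exact orth A d h j
  have h2 : LinearIndependent ℝ (walkMatrix A).row := by
    rw [linearIndependent_iff_card_eq_finrank_span]
    exact hr.symm.trans (Matrix.rank_eq_finrank_span_row _)
  rw [← Matrix.vecMul_injective_iff] at h2
  apply h2
  simp [h1]

end gen

section del
variable {n : ℕ}

def del (A : Matrix (Fin n) (Fin n) ℝ) (v : Fin n) :
    Matrix {w : Fin n | w ≠ v} {w : Fin n | w ≠ v} ℝ :=
  A.submatrix Subtype.val Subtype.val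

lemma sum_del {R : Type} [AddCommMonoid R] (v : Fin n) (f : Fin n → R) :
    ∑ i, f i = f v + ∑ i : {w : Fin n | w ≠ v}, f i.1 := by
  rw [Fintype.sum_eq_add_sum_compl v]
  congr 1
  refine Finset.sum_subtype _ ?_ f
  simp

lemma card_del (v : Fin n) : Fintype.card {w : Fin n | w ≠ v} + 1 = n := by
  have := sum_del v (fun _ => 1)
  simp only [Finset.sum_const, Finset.card_univ, smul_eq_mul, mul_one] at this
  rw [Fintype.card_fin] at this
  omega

lemma charmatrix_del (A : Matrix (Fin n) (Fin n) ℝ) (v : Fin n) :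
    charmatrix (del A v) = (charmatrix A).submatrix Subtype.val Subtype.val := by
  ext1 i j
  simp [charmatrix_apply, del, Matrix.diagonal_apply, Subtype.ext_iff]

lemma adj_diag (A : Matrix (Fin n) (Fin n) ℝ) (v : Fin n) :
    adjugate (charmatrix A) v v = (del A v).charpoly := by
  rw [Matrix.adjugate_apply, Matrix.twoBlockTriangular_det' _ (fun i => i = v)]
  · have h1 : (toSquareBlockProp ((charmatrix A).updateRow v (Pi.single v 1))
        fun i => i = v).det = 1 := by
      have : Unique {i : Fin n // i = v} := ⟨⟨⟨v, rfl⟩⟩, fun x => Subtype.ext x.2⟩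
      rw [Matrix.det_unique, Matrix.toSquareBlockProp_def]
      have h := (default : {i : Fin n // i = v}).2
      simp [h]
    refine (congrArg₂ (· * ·) (?_ : _ = (1 : ℝ[X])) rfl).trans ?_
    · convert h1
    rw [one_mul, Matrix.charpoly, charmatrix_del]
    have : (toSquareBlockProp ((charmatrix A).updateRow v (Pi.single v 1)) fun i => ¬ i = v)
        = (charmatrix A).submatrix (Subtype.val : {w : Fin n // ¬ w = v} → Fin n) Subtype.val := by
      ext1 i j
      simp [Matrix.toSquareBlockProp_def, Matrix.updateRow_apply, i.2]
    rw [this]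
    convert rfl
  · rintro i rfl j hj
    simp [hj]

lemma charpoly_ne {W : Type} [Fintype W] [DecidableEq W] (A : Matrix W W ℝ) :
    A.charpoly ≠ 0 := A.charpoly_monic.ne_zero

lemma mulVec_del (A : Matrix (Fin n) (Fin n) ℝ) (v : Fin n) (w : Fin n → ℝ[X])
    (hw : w v = 0) (i : {w : Fin n | w ≠ v}) :
    (charmatrix (del A v) *ᵥ fun j => w j.1) i = (charmatrix A *ᵥ w) i.1 := by
  rw [charmatrix_del]
  simp only [Matrix.mulVec, dotProduct]
  rw [sum_del v, hw]
  simp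

lemma adj_charmatrix_inj {W : Type} [Fintype W] [DecidableEq W] (A : Matrix W W ℝ)
    (w : W → ℝ[X]) (f : ℝ[X])
    (h : charmatrix A *ᵥ w = fun _ => A.charpoly * f) : w = fun i => f * yv A i := by
  have h2 := congrArg (fun x => adjugate (charmatrix A) *ᵥ x) h
  simp only [Matrix.mulVec_mulVec, Matrix.adjugate_mul, Matrix.smul_mulVec,
    Matrix.one_mulVec] at h2
  ext1 i
  have h3 := congrFun h2 i
  apply mul_left_cancel₀ (charpoly_ne A)
  simp only [Pi.smul_apply, smul_eq_mul] at h3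
  rw [Matrix.charpoly, h3, ← Matrix.charpoly]
  simp only [yv, Matrix.mulVec, dotProduct, Finset.mul_sum]
  exact Finset.sum_congr rfl fun j _ => by ring

lemma M_col (A : Matrix (Fin n) (Fin n) ℝ) (v i : Fin n) :
    (charmatrix A *ᵥ fun j => adjugate (charmatrix A) j v) i = if i = v then A.charpoly else 0 := by
  have := congrFun (congrFun (Matrix.mul_adjugate (charmatrix A)) i) v
  rw [Matrix.mul_apply] at this
  simp only [Matrix.mulVec, dotProduct]
  rw [this]
  simp [Matrix.one_apply, Matrix.charpoly]

lemma yv_eq (A : Matrix (Fin n) (Fin n) ℝ) (hA : Aᵀ = A) (v : Fin n) :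
    ∑ j, adjugate (charmatrix A) j v = yv A v := by
  simp only [yv, Matrix.mulVec, dotProduct, mul_one]
  exact Finset.sum_congr rfl fun j _ => adj_symm A hA j v

lemma key_id (A : Matrix (Fin n) (Fin n) ℝ) (hA : Aᵀ = A) (v : Fin n) :
    Nn A * (del A v).charpoly - Nn (del A v) * A.charpoly = yv A v ^ 2 := by
  set z : Fin n → ℝ[X] := fun j => adjugate (charmatrix A) j v with hz
  have hzv : z v = (del A v).charpoly := adj_diag A v
  set w : Fin n → ℝ[X] := (del A v).charpoly • yv A - yv A v • z with hw
  have hwv : w v = 0 := by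
    simp [hw, hzv]; ring
  have h1 : charmatrix (del A v) *ᵥ (fun j => w j.1)
      = fun _ => (del A v).charpoly * A.charpoly := by
    ext1 i
    rw [mulVec_del A v w hwv, hw, Matrix.mulVec_sub, Matrix.mulVec_smul, Matrix.mulVec_smul,
      M_yv]
    have : (i : Fin n) ≠ v := i.2
    simp [hz, M_col, this]
  have h2 := adj_charmatrix_inj _ _ _ h1
  have h3 : ∑ i, w i = A.charpoly * Nn (del A v) := by
    rw [sum_del v, hwv, zero_add, Nn, Finset.mul_sum]
    exact Finset.sum_congr rfl fun i _ => congrFun h2 i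
  have h4 : ∑ i, w i = (del A v).charpoly * Nn A - yv A v * yv A v := by
    simp only [hw, Pi.sub_apply, Pi.smul_apply, smul_eq_mul, Finset.sum_sub_distrib,
      ← Finset.mul_sum]
    rw [hz, yv_eq A hA v, Nn]
  linear_combination h3 - h4

lemma deriv_phi (A : Matrix (Fin n) (Fin n) ℝ) :
    derivative A.charpoly = ∑ v, (del A v).charpoly := by
  rw [deriv_charpoly]
  exact Finset.sum_congr rfl fun v _ => adj_diag A v

lemma deriv_N (A : Matrix (Fin n) (Fin n) ℝ) (hA : Aᵀ = A) :
    derivative (Nn A) = ∑ v, Nn (del A v) := by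
  have h1 : Nn A * derivative A.charpoly - (∑ v, Nn (del A v)) * A.charpoly
      = ∑ v, yv A v ^ 2 := by
    rw [deriv_phi, Finset.mul_sum, Finset.sum_mul, ← Finset.sum_sub_distrib]
    exact Finset.sum_congr rfl fun v _ => key_id A hA v
  have h2 : ∀ i, yv A i + (charmatrix A *ᵥ fun j => derivative (yv A j)) i
      = derivative A.charpoly := by
    intro i
    have := congrArg derivative (yv_rec A i)
    simp only [derivative_mul, derivative_X, one_mul, derivative_add, derivative_sum,
      derivative_C, zero_mul, zero_add] at this
    rw [charmatrix_mulVec]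
    linear_combination this
  have h3 : ∑ i, yv A i * (charmatrix A *ᵥ fun j => derivative (yv A j)) i
      = A.charpoly * derivative (Nn A) := by
    have hs : (charmatrix A)ᵀ = charmatrix A := by rw [← Matrix.charmatrix_transpose, hA]
    change yv A ⬝ᵥ (charmatrix A *ᵥ fun j => derivative (yv A j)) = _
    rw [Matrix.dotProduct_mulVec, ← Matrix.mulVec_transpose, hs, M_yv, Nn, derivative_sum,
      Finset.mul_sum]
    rfl
  have h4 : ∑ i, yv A i * (charmatrix A *ᵥ fun j => derivative (yv A j)) i
      = Nn A * derivative A.charpoly - ∑ v, yv A v ^ 2 := by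
    rw [Nn, Finset.sum_mul, ← Finset.sum_sub_distrib]
    exact Finset.sum_congr rfl fun i _ => by linear_combination yv A i * h2 i
  apply mul_left_cancel₀ (charpoly_ne A)
  linear_combination h4 - h3 + h1

lemma eq_add_C (p q : ℝ[X]) (h : derivative p = derivative q) : ∃ c, q = p + C c := by
  have : derivative (q - p) = 0 := by simp [h]
  exact ⟨(q - p).coeff 0, by rw [← eq_C_of_derivative_eq_zero this]; ring⟩

lemma main_cmp (hn : 3 ≤ n) (A B : Matrix (Fin n) (Fin n) ℝ) (hA : Aᵀ = A) (hB : Bᵀ = B)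
    (σ : Equiv.Perm (Fin n))
    (h1 : ∀ v, (del A v).charpoly = (del B (σ v)).charpoly)
    (h2 : ∀ v, Nn (del A v) = Nn (del B (σ v))) (v : Fin n) :
    yv A v = yv B (σ v) := by
  obtain ⟨c, hc⟩ := eq_add_C A.charpoly B.charpoly (by
    rw [deriv_phi, deriv_phi, ← Equiv.sum_comp σ (fun v => (del B v).charpoly)]
    exact Finset.sum_congr rfl fun v _ => h1 v)
  obtain ⟨d, hd⟩ := eq_add_C (Nn A) (Nn B) (by
    rw [deriv_N A hA, deriv_N B hB, ← Equiv.sum_comp σ (fun v => Nn (del B v))]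
    exact Finset.sum_congr rfl fun v _ => h2 v)
  obtain ⟨m, rfl⟩ : ∃ m, n = m + 1 := ⟨n - 1, by omega⟩
  have hcard : Fintype.card (Fin (m+1)) = m + 1 := Fintype.card_fin _
  have key : ∀ v, yv B (σ v) - yv A v = C (d / 2) := by
    intro v
    have hcd : Fintype.card {w : Fin (m+1) | w ≠ v} = m := by
      have := card_del v; omega
    have e1 := key_id A hA v
    have e2 := key_id B hB (σ v)
    rw [← h1, ← h2, hc, hd] at e2
    set q := yv B (σ v) - yv A v with hq
    set s := yv B (σ v) + yv A v with hs
    have e3 : q * s = C d * (del A v).charpoly - C c * Nn (del A v) := by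
      linear_combination e1 - e2
    have s1 : s.coeff m = 2 := by
      rw [hs, coeff_add, yv_coeff_lead _ m hcard, yv_coeff_lead _ m hcard]; norm_num
    have s0 : s ≠ 0 := by
      intro h; rw [h] at s1; simp at s1
    have s2 : m ≤ s.natDegree := le_natDegree_of_ne_zero (by rw [s1]; norm_num)
    have r0 : ∀ k, m ≤ k → (Nn (del A v)).coeff k = 0 := by
      intro k hk
      rw [Nn, finsetSum_coeff]
      exact Finset.sum_eq_zero fun i _ => yv_coeff_zero _ k (by rw [hcd]; exact hk) i
    have f0 : (del A v).charpoly.natDegree = m := by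
      rw [Matrix.charpoly_natDegree_eq_dim]; exact hcd
    have f1 : (del A v).charpoly.coeff m = 1 := by
      have := (del A v).charpoly_monic.coeff_natDegree
      simpa only [f0] using this
    have t0 : (q * s).natDegree ≤ m := by
      rw [e3, natDegree_le_iff_coeff_eq_zero]
      intro k hk
      rw [coeff_sub, coeff_C_mul, coeff_C_mul, r0 k (le_of_lt hk),
        coeff_eq_zero_of_natDegree_lt (by rw [f0]; exact hk)]
      simp
    obtain ⟨k, hk⟩ : ∃ k, q = C k := by
      by_cases hq0 : q = 0
      · exact ⟨0, by simp [hq0]⟩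
      · rw [natDegree_mul hq0 s0] at t0
        exact ⟨_, eq_C_of_natDegree_eq_zero (by omega)⟩
    rw [hk] at e3 ⊢
    have e4 := congrArg (fun p => p.coeff m) e3
    simp only [coeff_sub, coeff_C_mul, s1, f1, r0 m le_rfl] at e4
    congr 1
    linarith
  have hsum : Nn B - Nn A = ∑ v : Fin (m+1), C (d/2) := by
    rw [Nn, Nn, ← Equiv.sum_comp σ, ← Finset.sum_sub_distrib]
    exact Finset.sum_congr rfl fun v _ => key v
  rw [hd] at hsum
  have h5 := congrArg (fun p => p.coeff 0) hsum
  simp only [finsetSum_coeff, coeff_sub, coeff_add, coeff_C_zero] at h5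
  simp only [Finset.sum_const, Finset.card_univ, hcard, nsmul_eq_mul] at h5
  push_cast at h5
  have hm : (2:ℝ) ≤ m := by exact_mod_cast (by omega : 2 ≤ m)
  have hd0 : d = 0 := by
    have : d * ((m:ℝ) - 1) = 0 := by linarith
    rcases mul_eq_zero.1 this with h | h
    · exact h
    · linarith
  have := key v
  rw [hd0] at this
  simp at this
  linear_combination -this

lemma yv_del (A : Matrix (Fin n) (Fin n) ℝ) (hA : Aᵀ = A) (v : Fin n) :
    yv A v = (del A v).charpoly + ∑ i : {w : Fin n | w ≠ v}, C (A v i.1) * yv (del A v) i := by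
  set z : Fin n → ℝ[X] := fun j => adjugate (charmatrix A) j v with hz
  have hzv : z v = (del A v).charpoly := adj_diag A v
  have hs : (charmatrix A)ᵀ = charmatrix A := by rw [← Matrix.charmatrix_transpose, hA]
  rw [← yv_eq A hA v, sum_del v]
  change z v + ∑ i : {w : Fin n | w ≠ v}, z i.1 = _
  rw [hzv]
  congr 1
  let q : Fin n → ℝ[X] := fun j => if h : j ≠ v then yv (del A v) ⟨j, h⟩ else 0
  have hqv : q v = 0 := by simp [q]
  have hq : ∀ i : {w : Fin n | w ≠ v}, q i.1 = yv (del A v) i := by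
    intro i
    have : i.1 ≠ v := i.2
    simp [q, this]
  have hqf : (fun j : {w : Fin n | w ≠ v} => q j.1) = yv (del A v) := funext hq
  have e1 : ∀ i : {w : Fin n | w ≠ v}, (charmatrix A *ᵥ q) i.1 = (del A v).charpoly := by
    intro i
    rw [← mulVec_del A v q hqv, hqf, M_yv]
  have e2 : z ⬝ᵥ (charmatrix A *ᵥ q) = 0 := by
    rw [Matrix.dotProduct_mulVec, ← Matrix.mulVec_transpose, hs]
    have : (charmatrix A *ᵥ z) = fun i => if i = v then A.charpoly else 0 :=
      funext fun i => M_col A v i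
    rw [this]
    simp [dotProduct, hqv]
  have e3 : (charmatrix A *ᵥ q) v
      = - ∑ i : {w : Fin n | w ≠ v}, C (A v i.1) * yv (del A v) i := by
    rw [charmatrix_mulVec, sum_del v, hqv]
    simp [hq]
  rw [dotProduct, sum_del v, e3, hzv] at e2
  apply mul_left_cancel₀ (charpoly_ne (del A v))
  have e4 : ∑ i : {w : Fin n | w ≠ v}, z i.1 * (charmatrix A *ᵥ q) i.1
      = (del A v).charpoly * ∑ i : {w : Fin n | w ≠ v}, z i.1 := by
    rw [Finset.mul_sum]
    exact Finset.sum_congr rfl fun i _ => by rw [e1]; ring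
  rw [e4] at e2
  linear_combination e2

end del

lemma adjMat_symm {V : Type} [Fintype V] (G : SimpleGraph V) : (adjMat G)ᵀ = adjMat G := by
  ext i j
  simp [adjMat, G.adj_comm]

lemma adjMat_iso {V W : Type} [Fintype V] [Fintype W] (G : SimpleGraph V) (H : SimpleGraph W)
    (f : G ≃g H) : adjMat H = (adjMat G).reindex f.toEquiv f.toEquiv := by
  ext i j
  have : H.Adj i j ↔ G.Adj (f.symm i) (f.symm j) := by
    rw [← f.map_adj_iff]; simp
  simp only [adjMat, Matrix.reindex_apply, Matrix.submatrix_apply, Matrix.of_apply, this]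
  rfl

lemma del_adjMat {n : ℕ} (G : SimpleGraph (Fin n)) (v : Fin n) :
    del (adjMat G) v = adjMat (G.induce {w : Fin n | w ≠ v}) := by
  ext i j
  simp [del, adjMat]

/-- Hong's theorem. If some vertex-deleted subgraph `G - u` is
controllable, then `G` is reconstructible. -/
theorem reconstructible_of_controllable_vertex_deleted
    {n : ℕ} (hn : 3 ≤ n) (G : SimpleGraph (Fin n)) (u : Fin n)
    (hctrl : (walkMatrix (adjMat (G.induce {w : Fin n | w ≠ u}))).rank
        = Fintype.card {w : Fin n | w ≠ u} ) :
    Reconstructible G := by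
  intro H ⟨σ, hσ⟩
  have f : ∀ v, (G.induce {w : Fin n | w ≠ v}) ≃g (H.induce {w : Fin n | w ≠ σ v}) :=
    fun v => (hσ v).some
  have hre : ∀ v, del (adjMat H) (σ v)
      = (del (adjMat G) v).reindex (f v).toEquiv (f v).toEquiv := by
    intro v
    rw [del_adjMat, del_adjMat, adjMat_iso _ _ (f v)]
  have hphi : ∀ v, (del (adjMat G) v).charpoly = (del (adjMat H) (σ v)).charpoly := by
    intro v
    rw [hre, Matrix.charpoly_reindex]
  have hmain := main_cmp hn (adjMat G) (adjMat H) (adjMat_symm G) (adjMat_symm H) σ hphi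
    (fun v => by rw [hre, Nn_reindex]) u
  rw [yv_del _ (adjMat_symm G), yv_del _ (adjMat_symm H), ← hphi, ← (f u).toEquiv.sum_comp] at hmain
  have hs := add_left_cancel hmain
  rw [hre] at hs
  simp_rw [yv_reindex] at hs
  have hz := eq_zero_of_ctrl (del (adjMat G) u) (by rw [del_adjMat]; exact hctrl)
    (fun i => adjMat G u i.1 - adjMat H (σ u) ((f u).toEquiv i).1) (by
      simp only [map_sub, sub_mul, Finset.sum_sub_distrib]
      rw [hs, sub_self])
  have hadj : ∀ i : {w : Fin n | w ≠ u}, H.Adj (σ u) (f u i).1 ↔ G.Adj u i.1 := by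
    intro i
    have h := congrFun hz i
    have h' : adjMat G u i.1 = adjMat H (σ u) (f u i).1 := sub_eq_zero.1 h
    simp only [adjMat, Matrix.of_apply] at h'
    by_cases h1 : G.Adj u i.1 <;> by_cases h2 : H.Adj (σ u) (f u i).1 <;> simp_all
  have hadj2 : ∀ i j : {w : Fin n | w ≠ u}, H.Adj (f u i).1 (f u j).1 ↔ G.Adj i.1 j.1 := by
    intro i j
    exact (f u).map_adj_iff (v := i) (w := j)
  let g : Fin n → Fin n := fun x => if h : x ≠ u then (f u ⟨x, h⟩).1 else σ u
  have gu : g u = σ u := by simp [g]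
  have gi : ∀ i : {w : Fin n | w ≠ u}, g i.1 = (f u i).1 := by
    intro i
    have : i.1 ≠ u := i.2
    simp [g, this]
  have hcase : ∀ x, x = u ∨ ∃ i : {w : Fin n | w ≠ u}, i.1 = x := by
    intro x
    by_cases h : x = u
    · exact Or.inl h
    · exact Or.inr ⟨⟨x, h⟩, rfl⟩
  have ginj : Function.Injective g := by
    intro x y hxy
    rcases hcase x with rfl | ⟨i, rfl⟩ <;> rcases hcase y with hy | ⟨j, rfl⟩
    · exact hy.symm
    · rw [gu, gi] at hxy
      exact absurd hxy.symm (f x j).2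
    · rw [hy, gu, gi] at hxy
      exact absurd hxy (f u i).2
    · rw [gi, gi] at hxy
      rw [(f u).injective (Subtype.ext hxy)]
  refine ⟨⟨Equiv.ofBijective g (Finite.injective_iff_bijective.1 ginj), ?_⟩⟩
  intro x y
  change H.Adj (g x) (g y) ↔ G.Adj x y
  rcases hcase x with hx | ⟨i, rfl⟩ <;> rcases hcase y with hy | ⟨j, rfl⟩
  · rw [hx, hy]; simp
  · rw [hx, gu, gi]; exact hadj j
  · rw [hy, gu, gi, H.adj_comm, G.adj_comm]; exact hadj i
  · rw [gi, gi]; exact hadj2 i j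
end
end

section
/- Let n ≥ 3 and let G be an n-vertex graph with vertices {u₁,…,uₙ}. Suppose the vertex-deleted subgraph G−uₙ is almost controllable, and the matrix Q₀ = Q₀(G−uₙ) = I − 2ξξᵀ/(ξᵀξ) (where ξ is a nonzero vector with W(G−uₙ)ᵀξ = 0) is a permutation matrix. Then G is reconstructible. -/
open Matrix

open scoped Classical

noncomputable section

/-- The Householder matrix `Q₀ = I - 2ξξᵀ/(ξᵀξ)` associated with a vector `ξ`. -/
def householder {m : ℕ} (ξ : Fin m → ℝ) : Matrix (Fin m) (Fin m) ℝ :=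
  1 - (2 / (ξ ⬝ᵥ ξ)) • vecMulVec ξ ξ

/-- `Q` is a permutation matrix. -/
def IsPermMatrix {m : ℕ} (Q : Matrix (Fin m) (Fin m) ℝ) : Prop :=
  ∃ σ : Equiv.Perm (Fin m), Q = Matrix.of fun i j => if σ j = i then (1 : ℝ) else 0

open Polynomial in
lemma aux_derivative_det {n : Type} [Fintype n] [DecidableEq n] (M : Matrix n n ℝ[X]) :
    derivative M.det = ∑ i, (M.updateCol i (fun j => derivative (M j i))).det := by
  simp only [det_apply]
  rw [Finset.sum_comm, derivative_sum]
  refine Finset.sum_congr rfl fun σ _ => ?_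
  rw [← Finset.smul_sum]
  have : derivative (∏ i, M (σ i) i) =
      ∑ i, ∏ j, M.updateCol i (fun k => derivative (M k i)) (σ j) j := by
    rw [derivative_prod_finset]
    refine Finset.sum_congr rfl fun i _ => ?_
    rw [← Finset.mul_prod_erase Finset.univ _ (Finset.mem_univ i), mul_comm]
    congr 1
    · simp
    · refine Finset.prod_congr rfl fun j hj => ?_
      rw [Matrix.updateCol_ne (Finset.ne_of_mem_erase hj)]
  rw [← this]
  rcases Int.units_eq_one_or (Equiv.Perm.sign σ) with h | h <;> simp [h]

open Polynomial in
lemma aux_derivative_charpoly {m : ℕ} (M : Matrix (Fin (m + 1)) (Fin (m + 1)) ℝ) :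
    derivative M.charpoly = ∑ v, (M.submatrix (Fin.succAbove v) (Fin.succAbove v)).charpoly := by
  rw [Matrix.charpoly, aux_derivative_det]
  refine Finset.sum_congr rfl fun v _ => ?_
  have h1 : (fun j => derivative (M.charmatrix j v)) = Pi.single v 1 := by
    funext j
    by_cases h : j = v
    · subst h; simp
    · rw [charmatrix_apply_ne _ _ _ h]; simp [h]
  rw [h1]
  have h2 : (M.charmatrix.updateCol v (Pi.single v 1)).det = M.charmatrix.adjugate v v := by
    have h := congrFun (congrFun (adjugate_transpose M.charmatrix) v) v
    rw [transpose_apply] at h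
    rw [h, adjugate_apply, updateRow_transpose, det_transpose]
  rw [h2, adjugate_fin_succ_eq_det_submatrix, Matrix.charpoly]
  have h3 : M.charmatrix.submatrix v.succAbove v.succAbove
      = (M.submatrix v.succAbove v.succAbove).charmatrix := by
    ext i j : 2
    simp only [submatrix_apply, charmatrix_apply, diagonal_apply]
    simp
  rw [h3]
  simp [← two_mul]

open Polynomial in
lemma aux_bordered {m : ℕ} (M : Matrix (Fin (m + 1)) (Fin (m + 1)) ℝ) (B : Matrix (Fin m) (Fin m) ℝ)
    (c : Fin m → ℝ) (hB : ∀ i j, M i.castSucc j.castSucc = B i j)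
    (hc : ∀ i, M i.castSucc (Fin.last m) = c i) (hc' : ∀ i, M (Fin.last m) i.castSucc = c i) :
    M.charpoly = (X - C (M (Fin.last m) (Fin.last m))) * B.charpoly
      - (fun i => C (c i)) ⬝ᵥ (B.charmatrix.adjugate *ᵥ fun i => C (c i)) := by
  set β := M (Fin.last m) (Fin.last m) with hβ
  set cc : Fin m → ℝ[X] := fun i => C (c i) with hcc
  set P := B.charmatrix with hP
  let N : Matrix (Fin m ⊕ Fin 1) (Fin m ⊕ Fin 1) ℝ[X] :=
    fromBlocks P (of fun i _ => - cc i) (of fun _ i => - cc i) (of fun _ _ => X - C β)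
  have hN : M.charpoly = N.det := by
    rw [← charpoly_reindex (finSumFinEquiv (m := m) (n := 1)).symm M, Matrix.charpoly]
    congr 1
    ext i j : 2
    rcases i with i | i <;> rcases j with j | j
    · by_cases h : i = j
      · subst h
        simp only [charmatrix_apply_eq, N, fromBlocks_apply₁₁, hP, ← hB, reindex_apply,
          submatrix_apply]
        rfl
      · rw [charmatrix_apply_ne _ _ _ (by simpa using h)]
        simp only [N, fromBlocks_apply₁₁, hP, charmatrix_apply_ne _ _ _ h, ← hB, reindex_apply,
          submatrix_apply]
        rfl
    · rw [charmatrix_apply_ne _ _ _ (by simp)]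
      simp only [N, fromBlocks_apply₁₂, of_apply, hcc, ← hc, reindex_apply, submatrix_apply]
      have : finSumFinEquiv.symm.symm (Sum.inr j) = Fin.last m := by ext; simp
      rw [this]; rfl
    · rw [charmatrix_apply_ne _ _ _ (by simp)]
      simp only [N, fromBlocks_apply₂₁, of_apply, hcc, ← hc', reindex_apply, submatrix_apply]
      have : finSumFinEquiv.symm.symm (Sum.inr i) = Fin.last m := by ext; simp
      rw [this]; rfl
    · have := Subsingleton.elim i j
      subst this
      rw [charmatrix_apply_eq]
      simp only [N, fromBlocks_apply₂₂, of_apply, hβ, reindex_apply, submatrix_apply]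
      have : finSumFinEquiv.symm.symm (Sum.inr i) = Fin.last m := by ext; simp
      rw [this]
  rw [hN]
  let T : Matrix (Fin m ⊕ Fin 1) (Fin m ⊕ Fin 1) ℝ[X] :=
    fromBlocks 1 (of fun i _ => (P.adjugate *ᵥ cc) i) 0 (of fun _ _ => P.det)
  have hNT : N * T = fromBlocks P 0 (of fun _ i => - cc i)
      (of fun _ _ => (X - C β) * P.det - cc ⬝ᵥ (P.adjugate *ᵥ cc)) := by
    simp only [N, T, fromBlocks_multiply]
    congr 1
    · simp
    · ext i j : 2
      have h := congrFun (mulVec_mulVec cc P P.adjugate) i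
      rw [mul_adjugate, smul_mulVec, one_mulVec] at h
      simp only [Matrix.add_apply, Matrix.mul_apply, of_apply, Matrix.zero_apply, Finset.univ_unique,
        Finset.sum_singleton]
      simp only [mulVec, dotProduct, Pi.smul_apply, smul_eq_mul] at h ⊢
      rw [h]; ring
    · simp
    · ext i j : 2
      simp only [Matrix.add_apply, Matrix.mul_apply, of_apply, Finset.univ_unique,
        Finset.sum_singleton, dotProduct, neg_mul, Finset.sum_neg_distrib]
      ring
  have hd := congrArg det hNT
  rw [det_mul, det_fromBlocks_zero₁₂, det_fromBlocks_zero₂₁, det_one, one_mul,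
    det_unique (n := Fin 1), det_unique (n := Fin 1), of_apply, of_apply, mul_comm] at hd
  exact mul_left_cancel₀ (charpoly_monic B).ne_zero hd

open Polynomial in
lemma aux_adj_natDegree {m : ℕ} (B : Matrix (Fin m) (Fin m) ℝ) (i j : Fin m) (k : ℕ) (hk : m ≤ k) :
    (B.charmatrix.adjugate i j).coeff k = 0 := by
  have hm : 0 < m := i.pos
  have : Nonempty (Fin m) := ⟨i⟩
  have h1 : matPolyEquiv B.charmatrix * matPolyEquiv B.charmatrix.adjugate
      = B.charpoly.map (algebraMap ℝ (Matrix (Fin m) (Fin m) ℝ)) := by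
    rw [← map_mul, mul_adjugate, ← matPolyEquiv_smul_one]; rfl
  rw [matPolyEquiv_charmatrix] at h1
  have h2 := congrArg natDegree h1
  rw [← matPolyEquiv_coeff_apply]
  rw [coeff_eq_zero_of_natDegree_lt]; rfl
  by_cases h0 : matPolyEquiv B.charmatrix.adjugate = 0
  · rw [h0]; simp; omega
  rw [(monic_X_sub_C B).natDegree_mul' h0, natDegree_X_sub_C,
    (charpoly_monic B).natDegree_map, charpoly_natDegree_eq_dim, Fintype.card_fin] at h2
  omega

open Polynomial in
lemma aux_key {m : ℕ} (B : Matrix (Fin m) (Fin m) ℝ) (c c' : Fin m → ℝ) (κ : ℝ)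
    (h : (fun i => C (c i)) ⬝ᵥ (B.charmatrix.adjugate *ᵥ fun i => C (c i))
      - (fun i => C (c' i)) ⬝ᵥ (B.charmatrix.adjugate *ᵥ fun i => C (c' i)) = C κ)
    (k : ℕ) (hk : k + 2 ≤ m) : c ⬝ᵥ (B ^ k *ᵥ c) = c' ⬝ᵥ (B ^ k *ᵥ c') := by
  let F : ℕ → ℝ[X] := fun k => (fun i => C (c i)) ⬝ᵥ (((B ^ k).map C * B.charmatrix.adjugate) *ᵥ fun i => C (c i))
      - (fun i => C (c' i)) ⬝ᵥ (((B ^ k).map C * B.charmatrix.adjugate) *ᵥ fun i => C (c' i))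
  have hF0 : F 0 = C κ := by simp only [F]; simpa using h
  have hCm : ∀ (v : Fin m → ℝ) (k : ℕ), (fun i => C (v i)) ⬝ᵥ ((B ^ k).map C *ᵥ fun i => C (v i)) = C (v ⬝ᵥ (B ^ k *ᵥ v)) := by
    intro v k
    simp [dotProduct, mulVec, map_sum]
  have hrec : ∀ k, F (k + 1) = X * F k - C (c ⬝ᵥ (B ^ k *ᵥ c) - c' ⬝ᵥ (B ^ k *ᵥ c')) * B.charpoly := by
    intro k
    have e1 : (B ^ (k+1)).map C * B.charmatrix.adjugate = (X : ℝ[X]) • ((B ^ k).map C * B.charmatrix.adjugate) - B.charpoly • (B ^ k).map C := by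
      have e2 : B.charmatrix * B.charmatrix.adjugate = B.charpoly • 1 := mul_adjugate _
      have e3 : B.charmatrix = (X : ℝ[X]) • 1 - B.map C := by
        rw [charmatrix]; ext i j; simp [smul_one_eq_diagonal]
      have e4 : B.map C = (X : ℝ[X]) • 1 - B.charmatrix := by rw [e3]; simp
      rw [pow_succ, Matrix.map_mul, Matrix.mul_assoc, e4, Matrix.sub_mul, e2]
      simp [Matrix.mul_sub]
    simp only [F]
    rw [e1]
    simp only [sub_mulVec, smul_mulVec, dotProduct_sub, dotProduct_smul, hCm, smul_eq_mul, C_sub]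
    ring
  have hdeg : ∀ k j, m ≤ j → (F k).coeff j = 0 := by
    intro k j hj
    have : ∀ v : Fin m → ℝ, ((fun i => C (v i)) ⬝ᵥ (((B ^ k).map C * B.charmatrix.adjugate) *ᵥ fun i => C (v i))).coeff j = 0 := by
      intro v
      simp only [dotProduct, mulVec, Matrix.mul_apply, finsetSum_coeff, coeff_C_mul, coeff_mul_C, map_apply]
      simp [aux_adj_natDegree B _ _ j hj]
    simp only [F, coeff_sub, this, sub_self]
  have hmain : ∀ k, k + 1 ≤ m → F k = C κ * X ^ k ∧ (k + 2 ≤ m → c ⬝ᵥ (B ^ k *ᵥ c) - c' ⬝ᵥ (B ^ k *ᵥ c') = 0) := by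
    have step : ∀ k, k + 2 ≤ m → F k = C κ * X ^ k → c ⬝ᵥ (B ^ k *ᵥ c) - c' ⬝ᵥ (B ^ k *ᵥ c') = 0 := by
      intro k hk hFk
      have h1 := congrArg (fun p => coeff p m) (hrec k)
      simp only [hdeg (k+1) m le_rfl, coeff_sub, coeff_C_mul, hFk] at h1
      have h2 : B.charpoly.coeff m = 1 := by
        have := charpoly_monic B
        rwa [Monic, leadingCoeff, charpoly_natDegree_eq_dim, Fintype.card_fin] at this
      have h3 : (X * (C κ * X ^ k) : ℝ[X]).coeff m = 0 := by
        rw [show (X * (C κ * X ^ k) : ℝ[X]) = C κ * X ^ (k+1) by ring, coeff_C_mul, coeff_X_pow, if_neg (by omega), mul_zero]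
      rw [h2, h3] at h1
      linarith
    intro k
    induction k with
    | zero => intro _; exact ⟨by simp [hF0], fun h => step 0 h (by simp [hF0])⟩
    | succ k ih =>
      intro hk
      obtain ⟨a, b⟩ := ih (by omega)
      have : F (k+1) = C κ * X ^ (k+1) := by
        rw [hrec, b (by omega), a]; simp; ring
      exact ⟨this, fun h => step _ h this⟩
  exact sub_eq_zero.1 ((hmain k (by omega)).2 hk)

open Polynomial in
lemma aux_q {m : ℕ} (M M' : Matrix (Fin (m + 1)) (Fin (m + 1)) ℝ) (B : Matrix (Fin m) (Fin m) ℝ)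
    (c c' : Fin m → ℝ) (hB : ∀ i j, M i.castSucc j.castSucc = B i j)
    (hB' : ∀ i j, M' i.castSucc j.castSucc = B i j)
    (h1 : ∀ i, M i.castSucc (Fin.last m) = c i) (h2 : ∀ i, M (Fin.last m) i.castSucc = c i)
    (h1' : ∀ i, M' i.castSucc (Fin.last m) = c' i) (h2' : ∀ i, M' (Fin.last m) i.castSucc = c' i)
    (hβ : M (Fin.last m) (Fin.last m) = M' (Fin.last m) (Fin.last m))
    (hder : derivative M.charpoly = derivative M'.charpoly)
    (k : ℕ) (hk : k + 2 ≤ m) : c ⬝ᵥ (B ^ k *ᵥ c) = c' ⬝ᵥ (B ^ k *ᵥ c') := by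
  have h : derivative (M'.charpoly - M.charpoly) = 0 := by
    rw [derivative_sub, hder, sub_self]
  have h' := eq_C_of_natDegree_eq_zero (derivative_eq_zero.1 h)
  refine aux_key B c c' ((M'.charpoly - M.charpoly).coeff 0) ?_ k hk
  · rw [← h', aux_bordered M B c hB h1 h2, aux_bordered M' B c' hB' h1' h2', hβ]
    ring

lemma aux_walks {m : ℕ} (A : Matrix (Fin m) (Fin m) ℝ) (hA : Aᵀ = A) (b b' : Fin m → ℝ)
    (hq : ∀ (t : ℝ) (k : ℕ), k + 2 ≤ m →
      (fun i => b i + t) ⬝ᵥ ((A + of fun _ _ => t) ^ k *ᵥ fun i => b i + t) =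
      (fun i => b' i + t) ⬝ᵥ ((A + of fun _ _ => t) ^ k *ᵥ fun i => b' i + t)) (k : ℕ) :
    k + 2 ≤ m → (b - b') ⬝ᵥ (A ^ k *ᵥ fun _ => 1) = 0 := by
  induction k using Nat.strong_induction_on with
  | _ k ih =>
  intro hk
  have hB : ∀ (t : ℝ) (j : ℕ), j ≤ k →
      (b - b') ᵥ* (A + of fun _ _ => t) ^ j = (b - b') ᵥ* A ^ j := by
    intro t j
    induction j with
    | zero => simp
    | succ j ihj =>
      intro hj
      rw [pow_succ, ← vecMul_vecMul, ihj (by omega), vecMul_add, vecMul_vecMul, ← pow_succ]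
      have h0 := ih j (by omega) (by omega)
      rw [dotProduct_mulVec] at h0
      have : ((b - b') ᵥ* A ^ j) ᵥ* (of fun (_ _ : Fin m) => t) = 0 := by
        funext i
        simp only [dotProduct, mul_one] at h0
        simp only [vecMul, dotProduct, of_apply, Pi.zero_apply, ← Finset.sum_mul] at h0 ⊢
        rw [h0, zero_mul]
      rw [this, add_zero]
  have hmain : ∀ t : ℝ, ((b - b') ᵥ* A ^ k) ⬝ᵥ (b + b') + (2 * t) * (((b - b') ᵥ* A ^ k) ⬝ᵥ fun _ => 1) = 0 := by
    intro t
    have h := hq t k hk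
    set B := A + of fun _ _ => t with hBdef
    have hBt : (B ^ k)ᵀ = B ^ k := by
      rw [transpose_pow]; congr 1
      rw [hBdef, transpose_add, hA]; rfl
    set c : Fin m → ℝ := fun i => b i + t
    set c' : Fin m → ℝ := fun i => b' i + t
    have hsym : c ⬝ᵥ (B ^ k *ᵥ c') = c' ⬝ᵥ (B ^ k *ᵥ c) := by
      rw [dotProduct_mulVec, ← mulVec_transpose, hBt, dotProduct_comm]
    have hd : b - b' = c - c' := by funext i; simp [c, c']
    have hs : c + c' = (b + b') + (2 * t) • fun _ => 1 := by
      funext i; simp [c, c']; ring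
    have : ((b - b') ᵥ* B ^ k) ⬝ᵥ (c + c') = 0 := by
      rw [← dotProduct_mulVec, hd, mulVec_add, sub_dotProduct, dotProduct_add, dotProduct_add]
      linarith
    rw [hB t k le_rfl, hs, dotProduct_add, dotProduct_smul, smul_eq_mul] at this
    exact this
  have h0 := hmain 0
  have h1 := hmain 1
  rw [dotProduct_mulVec]
  linarith

lemma aux_rec {m N : ℕ} (hN : N = m) (A : Matrix (Fin m) (Fin m) ℝ) (a : Fin N → ℝ) (ha : a ≠ 0)
    (haA : ∑ j, a j • (A ^ (j : ℕ) *ᵥ fun _ => (1 : ℝ)) = 0) (d : Fin m → ℝ)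
    (hd : ∀ k, k + 2 ≤ m → d ⬝ᵥ (A ^ k *ᵥ fun _ => 1) = 0) (k : ℕ) :
    d ⬝ᵥ (A ^ k *ᵥ fun _ => 1) = 0 := by
  induction k using Nat.strong_induction_on with
  | _ k ih =>
  by_cases hk : k + 2 ≤ m
  · exact hd k hk
  obtain ⟨j0, hj0⟩ := Function.ne_iff.1 ha
  obtain ⟨p, hp, hmax⟩ := (Finset.univ.filter fun j => a j ≠ 0).exists_max_image
    (fun j => (j : ℕ)) ⟨j0, by simpa using hj0⟩
  have hpk : (p : ℕ) ≤ k := by have := p.2; omega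
  have h1 := congrArg (fun v => d ⬝ᵥ (A ^ (k - (p : ℕ)) *ᵥ v)) haA
  simp only [mulVec_zero, dotProduct_zero, mulVec_sum, dotProduct_sum, mulVec_smul,
    dotProduct_smul, mulVec_mulVec, ← pow_add, smul_eq_mul] at h1
  rw [Finset.sum_eq_single p] at h1
  · rw [Nat.sub_add_cancel hpk] at h1
    exact (mul_eq_zero.1 h1).resolve_left (by simpa using hp)
  · intro j _ hj
    by_cases haj : a j = 0
    · rw [haj, zero_mul]
    · have h2 := hmax j (by simpa using haj)
      have h3 : (j : ℕ) ≠ p := fun h => hj (Fin.ext h)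
      rw [ih _ (by omega), mul_zero]
  · simp

lemma aux_core {m : ℕ} (hm : 2 ≤ m) (A : Matrix (Fin m) (Fin m) ℝ) (hA : Aᵀ = A)
    (hac : (walkMatrix A).rank = m - 1) (ξ : Fin m → ℝ) (hξ : ξ ≠ 0)
    (hker : (walkMatrix A)ᵀ *ᵥ ξ = 0) (hperm : IsPermMatrix (householder ξ))
    (b b' : Fin m → ℝ)
    (hq : ∀ (t : ℝ) (k : ℕ), k + 2 ≤ m →
      (fun i => b i + t) ⬝ᵥ ((A + of fun _ _ => t) ^ k *ᵥ fun i => b i + t) =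
      (fun i => b' i + t) ⬝ᵥ ((A + of fun _ _ => t) ^ k *ᵥ fun i => b' i + t)) :
    ∃ π : Equiv.Perm (Fin m), (∀ i j, A i j = A (π i) (π j)) ∧ ∀ i, b i = b' (π i) := by
  have hN : Fintype.card (Fin m) = m := Fintype.card_fin m
  obtain ⟨a, ha, haA⟩ : ∃ a : Fin (Fintype.card (Fin m)) → ℝ, a ≠ 0 ∧
      ∑ j, a j • (A ^ (j : ℕ) *ᵥ fun _ => (1 : ℝ)) = 0 := by
    by_contra hcon
    push Not at hcon
    have hinj : Function.Injective (walkMatrix A).mulVecLin := by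
      rw [← LinearMap.ker_eq_bot, LinearMap.ker_eq_bot']
      intro a h
      by_contra h0
      refine hcon a h0 ?_
      rw [← h]
      funext i
      simp [walkMatrix, mulVec, dotProduct, mul_comm]
    have := LinearMap.finrank_range_of_inj hinj
    rw [Matrix.rank] at hac
    rw [hac] at this
    simp at this
    omega
  have hWt : ∀ v : Fin m → ℝ, (∀ k, v ⬝ᵥ (A ^ k *ᵥ fun _ => 1) = 0) →
      (walkMatrix A)ᵀ *ᵥ v = 0 := by
    intro v hv
    funext j
    have := hv j
    rw [dotProduct_comm] at this
    simpa [walkMatrix, mulVec, dotProduct] using this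
  have hone : ∀ v : Fin m → ℝ, (walkMatrix A)ᵀ *ᵥ v = 0 → ∃ s : ℝ, s • ξ = v := by
    have h1 := LinearMap.finrank_range_add_finrank_ker (walkMatrix A)ᵀ.mulVecLin
    have h2 : (walkMatrix A)ᵀ.rank = m - 1 := by rw [rank_transpose, hac]
    rw [Matrix.rank] at h2
    rw [h2] at h1
    have h3 : Module.finrank ℝ (LinearMap.ker (walkMatrix A)ᵀ.mulVecLin) = 1 := by
      simp at h1
      omega
    have h4 := (finrank_eq_one_iff_of_nonzero'
      (⟨ξ, hker⟩ : LinearMap.ker (walkMatrix A)ᵀ.mulVecLin)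
      (by simpa [Subtype.ext_iff] using hξ)).1 h3
    intro v hv
    obtain ⟨s, hs⟩ := h4 ⟨v, hv⟩
    exact ⟨s, congrArg Subtype.val hs⟩
  have hξk : ∀ k, ξ ⬝ᵥ (A ^ k *ᵥ fun _ => 1) = 0 := by
    refine aux_rec hN A a ha haA ξ ?_
    intro k hk
    have := congrFun hker ⟨k, by omega⟩
    rw [dotProduct_comm]
    simpa [walkMatrix, mulVec, dotProduct] using this
  obtain ⟨l, hl⟩ : ∃ l : ℝ, l • ξ = A *ᵥ ξ := by
    refine hone _ (hWt _ ?_)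
    intro k
    have h := hξk (k + 1)
    rw [pow_succ', ← mulVec_mulVec, dotProduct_mulVec, ← mulVec_transpose, hA] at h
    exact h
  obtain ⟨s, hs⟩ : ∃ s : ℝ, s • ξ = b - b' :=
    hone _ (hWt _ (aux_rec hN A a ha haA _ (aux_walks A hA b b' hq)))
  by_cases hs0 : s = 0
  · refine ⟨1, by simp, fun i => ?_⟩
    have := congrFun hs i
    simp [hs0] at this
    simp; linarith
  obtain ⟨π, hπ⟩ := hperm
  have hξξ : ξ ⬝ᵥ ξ ≠ 0 := by simpa using hξ
  set τ := 2 / (ξ ⬝ᵥ ξ) with hτ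
  have hQ : ∀ (v : Fin m → ℝ) (j : Fin m), v j = v (π j) - τ * (ξ ⬝ᵥ v) * ξ (π j) := by
    intro v j
    have h := congrFun (congrArg (fun Q => Q *ᵥ v) hπ) (π j)
    simp only [householder, ← hτ, sub_mulVec, one_mulVec, smul_mulVec, vecMulVec_mulVec] at h
    have h' : ((of fun i j => if π j = i then (1 : ℝ) else 0) *ᵥ v) (π j) = v j := by
      simp [mulVec, dotProduct]
    rw [h'] at h
    rw [← h]
    simp
    ring
  refine ⟨π, ?_, ?_⟩
  · have hξπ : ∀ j, ξ j = - ξ (π j) := by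
      intro j
      have := hQ ξ j
      rw [hτ, div_mul_cancel₀ _ hξξ] at this
      linarith
    have hAs : ∀ i j, A i j = A j i := fun i j => congrFun (congrFun hA j) i
    have hAξ : ∀ i, ξ ⬝ᵥ (A i) = l * ξ i := by
      intro i
      have := congrFun hl i
      rw [dotProduct_comm]
      exact this.symm
    intro i j
    have e1 := hQ (A j) i
    have e2 := hQ (A (π i)) j
    rw [hAξ] at e1 e2
    rw [hAs j i, hAs j (π i), hξπ j] at e1
    rw [e1, e2]
    ring
  · intro i
    have h0 := hq 0 0 (by omega)
    simp only [add_zero, pow_zero, one_mulVec] at h0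
    have h1 : (s • ξ) ⬝ᵥ (s • ξ) = 2 * ((s • ξ) ⬝ᵥ b) := by
      rw [hs]
      simp only [sub_dotProduct, dotProduct_sub]
      rw [dotProduct_comm b' b]
      linarith
    simp only [smul_dotProduct, dotProduct_smul, smul_eq_mul] at h1
    have h2 : s * (ξ ⬝ᵥ ξ) = 2 * (ξ ⬝ᵥ b) := mul_left_cancel₀ hs0 (by linarith)
    have h3 : τ * (ξ ⬝ᵥ b) = s := by
      rw [hτ]; field_simp; linarith
    have h4 := hQ b i
    rw [h3] at h4
    have h5 := congrFun hs (π i)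
    simp at h5
    linarith

lemma aux_charpoly_sub {m : ℕ} (G H : SimpleGraph (Fin (m + 1))) (v w : Fin (m + 1))
    (f : (G.induce {x : Fin (m + 1) | x ≠ v}) ≃g (H.induce {x : Fin (m + 1) | x ≠ w})) (t : ℝ) :
    ((adjMat G + of fun _ _ => t).submatrix v.succAbove v.succAbove).charpoly =
    ((adjMat H + of fun _ _ => t).submatrix w.succAbove w.succAbove).charpoly := by
  let e : Fin m ≃ Fin m :=
    ((finSuccAboveEquiv v).trans f.toEquiv).trans (finSuccAboveEquiv w).symm
  have he : ∀ i, w.succAbove (e i) = (f ⟨v.succAbove i, v.succAbove_ne i⟩ : Fin (m + 1)) := by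
    intro i
    have : finSuccAboveEquiv w (e i) = f ⟨v.succAbove i, v.succAbove_ne i⟩ := by
      simp only [e, Equiv.trans_apply, Equiv.apply_symm_apply]
      rfl
    exact congrArg Subtype.val this
  refine (charpoly_reindex e _).symm.trans ?_
  congr 1
  ext i j
  obtain ⟨i, rfl⟩ := e.surjective i
  obtain ⟨j, rfl⟩ := e.surjective j
  have hadj : H.Adj (w.succAbove (e i)) (w.succAbove (e j)) ↔
      G.Adj (v.succAbove i) (v.succAbove j) := by
    rw [he, he]
    exact f.map_adj_iff (v := ⟨v.succAbove i, v.succAbove_ne i⟩)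
      (w := ⟨v.succAbove j, v.succAbove_ne j⟩)
  simp [adjMat, hadj]

lemma aux_graph {m : ℕ} (hm : 2 ≤ m) (G H : SimpleGraph (Fin (m + 1)))
    (hGH : ∀ i j : Fin m, G.Adj i.castSucc j.castSucc ↔ H.Adj i.castSucc j.castSucc)
    (hder : ∀ t : ℝ, Polynomial.derivative (adjMat G + of fun _ _ => t).charpoly =
      Polynomial.derivative (adjMat H + of fun _ _ => t).charpoly)
    (hac : (walkMatrix (adjMat (G.comap (Fin.castSucc : Fin m → Fin (m + 1))))).rank = m - 1)
    (ξ : Fin m → ℝ) (hξ : ξ ≠ 0)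
    (hker : (walkMatrix (adjMat (G.comap (Fin.castSucc : Fin m → Fin (m + 1)))))ᵀ *ᵥ ξ = 0)
    (hperm : IsPermMatrix (householder ξ)) : Nonempty (G ≃g H) := by
  have hsymm : (adjMat (G.comap (Fin.castSucc : Fin m → Fin (m + 1))))ᵀ =
      adjMat (G.comap (Fin.castSucc : Fin m → Fin (m + 1))) := by
    ext i j
    simp [adjMat, SimpleGraph.adj_comm]
  obtain ⟨π, hπ1, hπ2⟩ := aux_core hm _ hsymm hac ξ hξ hker hperm
    (fun i => adjMat G i.castSucc (Fin.last m)) (fun i => adjMat H i.castSucc (Fin.last m)) (by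
      intro t k hk
      refine aux_q (adjMat G + of fun _ _ => t) (adjMat H + of fun _ _ => t) _ _ _
        ?_ ?_ ?_ ?_ ?_ ?_ ?_ (hder t) k hk
      · intro i j; simp [adjMat]
      · intro i j; simp [adjMat, hGH]
      · intro i; simp
      · intro i; simp [adjMat, SimpleGraph.adj_comm]
      · intro i; simp
      · intro i; simp [adjMat, SimpleGraph.adj_comm]
      · simp [adjMat])
  have hite : ∀ p q : Prop, ((if p then (1 : ℝ) else 0) = if q then 1 else 0) → (p ↔ q) := by
    intro p q h
    by_cases hp : p <;> by_cases hq : q <;> simp_all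
  have h1 : ∀ i j : Fin m, G.Adj i.castSucc j.castSucc ↔ H.Adj (π i).castSucc (π j).castSucc := by
    intro i j
    rw [← hGH]
    exact hite _ _ (hπ1 i j)
  have h2 : ∀ i : Fin m, G.Adj i.castSucc (Fin.last m) ↔ H.Adj (π i).castSucc (Fin.last m) :=
    fun i => hite _ _ (hπ2 i)
  let ρ : Fin (m + 1) ≃ Fin (m + 1) :=
    (finSuccEquivLast.trans (Equiv.optionCongr π)).trans finSuccEquivLast.symm
  have hρ1 : ∀ i : Fin m, ρ i.castSucc = (π i).castSucc := by intro i; simp [ρ]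
  have hρ2 : ρ (Fin.last m) = Fin.last m := by simp [ρ]
  refine ⟨⟨ρ, ?_⟩⟩
  intro a b
  induction a using Fin.lastCases with
  | last =>
    induction b using Fin.lastCases with
    | last => simp
    | cast j => rw [hρ1, hρ2, H.adj_comm, G.adj_comm]; exact (h2 j).symm
  | cast i =>
    induction b using Fin.lastCases with
    | last => rw [hρ1, hρ2]; exact (h2 i).symm
    | cast j => rw [hρ1, hρ1]; exact (h1 i j).symm

/-- Theorem 9 (i). Let `n = m + 1 ≥ 3` and let `G` be a graph on
`{u₁, …, uₙ} = Fin (m+1)`. If `G - uₙ` (the induced subgraph on the first `m` vertices) is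
almost controllable and its Householder matrix `Q₀(G - uₙ)` is a permutation matrix, then `G`
is reconstructible. -/
theorem reconstructible_of_almost_controllable_symmetric
    {m : ℕ} (hn : 3 ≤ m + 1) (G : SimpleGraph (Fin (m + 1)))
    (hac : (walkMatrix (adjMat (G.comap (Fin.castSucc : Fin m → Fin (m + 1))))).rank = m - 1)
    (ξ : Fin m → ℝ) (hξ : ξ ≠ 0)
    (hker : (walkMatrix (adjMat (G.comap (Fin.castSucc : Fin m → Fin (m + 1)))))ᵀ *ᵥ ξ = 0)
    (hperm : IsPermMatrix (householder ξ)) :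
    Reconstructible G := by
  rintro H ⟨σ, hσ⟩
  have f := fun v => (hσ v).some
  let τ : Equiv.Perm (Fin (m + 1)) :=
    Equiv.extendSubtype (p := fun x => x ≠ Fin.last m) (q := fun x => x ≠ σ (Fin.last m))
      (f (Fin.last m)).toEquiv
  have hτ : ∀ i : Fin m, τ i.castSucc =
      (f (Fin.last m) ⟨i.castSucc, (Fin.castSucc_lt_last i).ne⟩ : Fin (m + 1)) := fun i =>
    Equiv.extendSubtype_apply_of_mem (p := fun x => x ≠ Fin.last m)
      (q := fun x => x ≠ σ (Fin.last m)) (f (Fin.last m)).toEquiv i.castSucc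
      (Fin.castSucc_lt_last i).ne
  have key : Nonempty (G ≃g H.comap τ) := by
    refine aux_graph (by omega) G (H.comap τ) ?_ ?_ hac ξ hξ hker hperm
    · intro i j
      rw [SimpleGraph.comap_adj, hτ, hτ]
      exact ((f (Fin.last m)).map_adj_iff (v := ⟨i.castSucc, (Fin.castSucc_lt_last i).ne⟩)
        (w := ⟨j.castSucc, (Fin.castSucc_lt_last j).ne⟩)).symm
    · intro t
      have hc : (adjMat (H.comap τ) + of fun _ _ => t).charpoly =
          (adjMat H + of fun _ _ => t).charpoly := by
        refine (charpoly_reindex τ _).symm.trans ?_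
        congr 1
        ext i j
        simp [adjMat]
      rw [hc, aux_derivative_charpoly, aux_derivative_charpoly]
      refine Eq.trans ?_ (Equiv.sum_comp σ _)
      exact Finset.sum_congr rfl fun v _ => aux_charpoly_sub G H v (σ v) (f v) t
  obtain ⟨g⟩ := key
  exact ⟨g.trans (SimpleGraph.Iso.comap τ H)⟩
end
end
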